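/- Let X and Y be metric spaces and let f : X → Y be a surjective map that is coarse and coarsely n-to-1 (n ≥ 1). Suppose there is an integer m ≥ 1 such that for every R > 0 there exist families 𝒱₁, …, 𝒱ₘ of subsets of X whose union 𝒱 = 𝒱₁ ∪ … ∪ 𝒱ₘ is a uniformly bounded cover of X with each 𝒱ᵢ R-disjoint. Then for every S > 0 there exists a uniformly bounded cover of Y with Lebesgue number at least S and multiplicity at most n·m; in particular Y has asymptotic dimension at most n·m − 1. -/

import Mathlib

open Metric Set

/-- A set `U` is uniformly bounded by `D`: all pairwise distances are at most `D`. -/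
def UBdd {X : Type*} [MetricSpace X] (D : ℝ) (U : Set X) : Prop :=
  ∀ x ∈ U, ∀ y ∈ U, dist x y ≤ D

/-- A family of subsets covers `X`. -/
def IsCover {X : Type*} (𝒱 : Set (Set X)) : Prop := ∀ x : X, ∃ U ∈ 𝒱, x ∈ U

/-- The cover `𝒱` has Lebesgue number at least `R`: every open `R`-ball is
contained in some member of `𝒱`. -/
def LebAtLeast {X : Type*} [MetricSpace X] (R : ℝ) (𝒱 : Set (Set X)) : Prop :=
  ∀ x : X, ∃ U ∈ 𝒱, Metric.ball x R ⊆ U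

/-- The family `𝒱` has multiplicity at most `m`: every point belongs to at most
`m` members of `𝒱`. -/
def MultAtMost {X : Type*} (m : ℕ) (𝒱 : Set (Set X)) : Prop :=
  ∀ x : X, {U ∈ 𝒱 | x ∈ U}.Finite ∧ {U ∈ 𝒱 | x ∈ U}.ncard ≤ m

/-- The family `𝒱` is `R`-disjoint: points of distinct members are at distance at least `R`. -/
def RDisjoint {X : Type*} [MetricSpace X] (R : ℝ) (𝒱 : Set (Set X)) : Prop :=
  ∀ A ∈ 𝒱, ∀ B ∈ 𝒱, A ≠ B → ∀ a ∈ A, ∀ b ∈ B, R ≤ dist a b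

/-- A map is coarse (bornologous). -/
def Coarse {X Y : Type*} [MetricSpace X] [MetricSpace Y] (f : X → Y) : Prop :=
  ∀ R > (0:ℝ), ∃ S > (0:ℝ), ∀ x x' : X, dist x x' ≤ R → dist (f x) (f x') ≤ S

/-- A map is coarsely `n`-to-`1`: preimages of sets of diameter at most `R` can be covered
by at most `n` sets of diameter at most `S`, where `S` depends only on `R`. -/
def CoarselyNTo1 {X Y : Type*} [MetricSpace X] [MetricSpace Y] (n : ℕ) (f : X → Y) : Prop :=
  ∀ R > (0:ℝ), ∃ S > (0:ℝ), ∀ A : Set Y, UBdd R A →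
    ∃ B : Fin n → Set X, f ⁻¹' A ⊆ ⋃ i, B i ∧ ∀ i, UBdd S (B i)

/-- The star of a set `B` with respect to a family `𝒰`: the union of all members of `𝒰`
meeting `B`. -/
def StarOf {X : Type*} (B : Set X) (𝒰 : Set (Set X)) : Set X :=
  ⋃₀ {U ∈ 𝒰 | (U ∩ B).Nonempty}

/-! Push the cover of `X` forward by `f` and thicken its members by `S`. The members of the new
cover that contain `y` come from the sets `U` meeting the fibre `f ⁻¹' ball y S`. That fibre lies in
`n` sets of diameter at most some `T` that depends only on `S`, and if each of the `m` families is
`R`-disjoint with `R > T`, then each of those sets meets at most one member of each family. -/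

section Cover

variable {X Y : Type*}

lemma IsCover.image {f : X → Y} {𝒱 : Set (Set X)} (h𝒱 : IsCover 𝒱)
    (hf : Function.Surjective f) : IsCover (Set.image f '' 𝒱) := by
  intro y
  obtain ⟨x, rfl⟩ := hf y
  obtain ⟨U, hU, hxU⟩ := h𝒱 x
  exact ⟨f '' U, mem_image_of_mem _ hU, mem_image_of_mem f hxU⟩

lemma encard_image_meeting_le (f : X → Y) (𝒱 : Set (Set X)) (A : Set Y) :
    {W ∈ Set.image f '' 𝒱 | (W ∩ A).Nonempty}.encard ≤
      {U ∈ 𝒱 | (U ∩ f ⁻¹' A).Nonempty}.encard := by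
  have meeting_subset : {W ∈ Set.image f '' 𝒱 | (W ∩ A).Nonempty} ⊆
      Set.image f '' {U ∈ 𝒱 | (U ∩ f ⁻¹' A).Nonempty} := by
    rintro _ ⟨⟨U, hU, rfl⟩, hUA⟩
    exact ⟨U, ⟨hU, image_inter_nonempty_iff.1 hUA⟩, rfl⟩
  exact (encard_le_encard meeting_subset).trans (encard_image_le _ _)

end Cover

section UniformlyBounded

variable {X Y : Type*} [MetricSpace X] [MetricSpace Y]

lemma UBdd.image {f : X → Y} {D E : ℝ} {U : Set X} (hU : UBdd D U)
    (hf : ∀ x x' : X, dist x x' ≤ D → dist (f x) (f x') ≤ E) : UBdd E (f '' U) := by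
  rintro _ ⟨x, hx, rfl⟩ _ ⟨x', hx', rfl⟩
  exact hf x x' (hU x hx x' hx')

lemma UBdd.thickening {D : ℝ} {U : Set X} (hU : UBdd D U) (S : ℝ) :
    UBdd (D + 2 * S) (thickening S U) := by
  intro x hx y hy
  obtain ⟨a, ha, hxa⟩ := mem_thickening_iff.1 hx
  obtain ⟨b, hb, hyb⟩ := mem_thickening_iff.1 hy
  calc dist x y ≤ dist x a + dist a b + dist b y := dist_triangle4 x a b y
    _ ≤ S + D + S := by
      rw [dist_comm b y]
      gcongr
      exact hU a ha b hb
    _ = D + 2 * S := by ring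

lemma uBdd_ball (x : X) (S : ℝ) : UBdd (2 * S) (ball x S) := by
  intro a ha b hb
  rw [mem_ball] at ha hb
  linarith [dist_triangle_right a b x]

end UniformlyBounded

section Thickening

variable {X : Type*} [MetricSpace X]

lemma LebAtLeast.isCover {S : ℝ} {𝒱 : Set (Set X)} (h𝒱 : LebAtLeast S 𝒱) (hS : 0 < S) :
    IsCover 𝒱 := fun x ↦
  let ⟨U, hU, hxU⟩ := h𝒱 x
  ⟨U, hU, hxU (mem_ball_self hS)⟩

lemma IsCover.lebAtLeast_thickening {𝒱 : Set (Set X)} (h𝒱 : IsCover 𝒱) (S : ℝ) :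
    LebAtLeast S (thickening S '' 𝒱) := fun x ↦
  let ⟨U, hU, hxU⟩ := h𝒱 x
  ⟨thickening S U, mem_image_of_mem _ hU, ball_subset_thickening hxU S⟩

lemma multAtMost_thickening {k : ℕ} {S : ℝ} {𝒱 : Set (Set X)}
    (h𝒱 : ∀ x, {U ∈ 𝒱 | (U ∩ ball x S).Nonempty}.encard ≤ k) :
    MultAtMost k (thickening S '' 𝒱) := by
  intro x
  have containing_subset : {W ∈ thickening S '' 𝒱 | x ∈ W} ⊆
      thickening S '' {U ∈ 𝒱 | (U ∩ ball x S).Nonempty} := by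
    rintro _ ⟨⟨U, hU, rfl⟩, hxU⟩
    obtain ⟨z, hz, hxz⟩ := mem_thickening_iff.1 hxU
    exact ⟨U, ⟨hU, z, hz, mem_ball'.2 hxz⟩, rfl⟩
  rw [← encard_le_coe_iff_finite_ncard_le]
  exact (encard_le_encard containing_subset).trans ((encard_image_le _ _).trans (h𝒱 x))

end Thickening

section Disjoint

variable {X : Type*} [MetricSpace X] {R T : ℝ}

lemma RDisjoint.subsingleton_meeting {𝒱 : Set (Set X)} (h𝒱 : RDisjoint R 𝒱) {B : Set X}
    (hB : UBdd T B) (hTR : T < R) : {U ∈ 𝒱 | (U ∩ B).Nonempty}.Subsingleton := by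
  rintro U ⟨hU, x, hxU, hxB⟩ U' ⟨hU', x', hxU', hxB'⟩
  by_contra hne
  exact (h𝒱 U hU U' hU' hne x hxU x' hxU').not_gt ((hB x hxB x' hxB').trans_lt hTR)

lemma encard_meeting_le_of_rDisjoint {ι κ : Type*} [Fintype ι] [Fintype κ]
    {V : ι → Set (Set X)} (hV : ∀ i, RDisjoint R (V i)) {B : κ → Set X}
    (hB : ∀ j, UBdd T (B j)) (hTR : T < R) {A : Set X} (hA : A ⊆ ⋃ j, B j) :
    {U ∈ ⋃ i, V i | (U ∩ A).Nonempty}.encard ≤ (Fintype.card κ * Fintype.card ι : ℕ) := by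
  have meeting_subset : {U ∈ ⋃ i, V i | (U ∩ A).Nonempty} ⊆
      ⋃ p : κ × ι, {U ∈ V p.2 | (U ∩ B p.1).Nonempty} := by
    rintro U ⟨hU, x, hxU, hxA⟩
    obtain ⟨i, hi⟩ := mem_iUnion.1 hU
    obtain ⟨j, hj⟩ := mem_iUnion.1 (hA hxA)
    exact mem_iUnion.2 ⟨(j, i), hi, x, hxU, hj⟩
  calc {U ∈ ⋃ i, V i | (U ∩ A).Nonempty}.encard
      ≤ (⋃ p : κ × ι, {U ∈ V p.2 | (U ∩ B p.1).Nonempty}).encard :=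
        encard_le_encard meeting_subset
    _ ≤ ∑ p : κ × ι, {U ∈ V p.2 | (U ∩ B p.1).Nonempty}.encard := encard_iUnion_le_of_fintype _
    _ ≤ ∑ _p : κ × ι, 1 := by
        gcongr with p
        exact encard_le_one_iff_subsingleton.2 ((hV p.2).subsingleton_meeting (hB p.1) hTR)
    _ = (Fintype.card κ * Fintype.card ι : ℕ) := by simp

end Disjoint

/-- Pushing forward finite asymptotic dimension along a surjective coarse, coarsely
`n`-to-`1` map: if `X` admits, for every `R`, uniformly bounded covers splitting into `m`
many `R`-disjoint families, then `Y` admits, for every `S`, a uniformly bounded cover with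
Lebesgue number at least `S` and multiplicity at most `n * m`. -/
theorem stmt6 {X Y : Type*} [MetricSpace X] [MetricSpace Y] (n m : ℕ) (hn : 1 ≤ n)
    (hm : 1 ≤ m) (f : X → Y) (hsurj : Function.Surjective f) (hcoarse : Coarse f)
    (hnto1 : CoarselyNTo1 n f)
    (hX : ∀ R > (0:ℝ), ∃ V : Fin m → Set (Set X), ∃ D > (0:ℝ),
      IsCover (⋃ i, V i) ∧ (∀ U ∈ ⋃ i, V i, UBdd D U) ∧ ∀ i, RDisjoint R (V i)) :
    ∀ S > (0:ℝ), ∃ 𝒲 : Set (Set Y), ∃ D > (0:ℝ), IsCover 𝒲 ∧ (∀ W ∈ 𝒲, UBdd D W) ∧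
      LebAtLeast S 𝒲 ∧ MultAtMost (n * m) 𝒲 := by
  intro S hS
  obtain ⟨T, hT, hfib⟩ := hnto1 (2 * S) (by positivity)
  obtain ⟨V, D, hD, hcov, hbdd, hdisj⟩ := hX (T + 1) (by positivity)
  obtain ⟨E, hE, hfE⟩ := hcoarse D hD
  have hleb : LebAtLeast S (thickening S '' (Set.image f '' ⋃ i, V i)) :=
    (hcov.image hsurj).lebAtLeast_thickening S
  refine ⟨_, E + 2 * S, by positivity, hleb.isCover hS, ?bounded, hleb, multAtMost_thickening ?mult⟩
  case bounded =>
    rintro _ ⟨_, ⟨U, hU, rfl⟩, rfl⟩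
    exact ((hbdd U hU).image hfE).thickening S
  case mult =>
    intro y
    obtain ⟨B, hcovB, hbddB⟩ := hfib (ball y S) (uBdd_ball y S)
    have hfibre : {U ∈ ⋃ i, V i | (U ∩ f ⁻¹' ball y S).Nonempty}.encard ≤ (n * m : ℕ) := by
      simpa only [Fintype.card_fin] using
        encard_meeting_le_of_rDisjoint hdisj hbddB (lt_add_one T) hcovB
    exact (encard_image_meeting_le f (⋃ i, V i) (ball y S)).trans hfibre
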